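/- arXiv:2601.22088 — 7 statements merged into one kernel-verified Lean document; each statement's English description precedes it below -/
import Mathlib

section
/- Let s, c2, δ ∈ ℝ be constants, let u, ρ : ℝ × ℝ → ℝ be C² functions satisfying the magnetic two-component Hunter–Saxton system pointwise, i.e. ∂t∂x u = -(1/2)(∂x u)² - u ∂x∂x u + (1/2)ρ² - (sρ + 2(c2 - sδ)) and ∂t ρ = -∂x(ρ u) + s ∂x u, and let φ : ℝ × ℝ → ℝ be differentiable in t with ∂t φ(t,x) = u(t, φ(t,x)) and φ(0,x) = x. Then for each fixed x the Lagrangian variables U(t) := (∂x u)(t, φ(t,x)) and P(t) := ρ(t, φ(t,x)) satisfy the ODE system U'(t) = -(1/2)U(t)² + (1/2)P(t)² - (s P(t) + 2(c2 - sδ)) and P'(t) = -P(t)U(t) + s U(t), with U(0) = (∂x u)(0,x) and P(0) = ρ(0,x). -/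
/-- Partial derivative in the first (time) variable. -/
noncomputable def pdt (f : ℝ × ℝ → ℝ) (t x : ℝ) : ℝ := deriv (fun τ => f (τ, x)) t

/-- Partial derivative in the second (space) variable. -/
noncomputable def pdx (f : ℝ × ℝ → ℝ) (t x : ℝ) : ℝ := deriv (fun y => f (t, y)) x

/-!
Along a characteristic `γ' = u(t, γ)` the chain rule turns the operator `∂ₜ + u ∂ₓ` into an ordinary
time derivative. The first equation is the advection equation `(∂ₜ + u ∂ₓ) ∂ₓu = F`. The second is a
conservation law, and expanding the flux `∂ₓ(ρu) = u ∂ₓρ + ρ ∂ₓu` makes it an advection equation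
for `ρ` with the additional source `-ρ ∂ₓu`.
-/

section PartialDerivatives

variable {f g : ℝ × ℝ → ℝ} {t x : ℝ}

theorem pdt_eq_fderiv (hf : DifferentiableAt ℝ f (t, x)) : pdt f t x = fderiv ℝ f (t, x) (1, 0) :=
  (hf.hasFDerivAt.comp_hasDerivAt t ((hasDerivAt_id t).prodMk (hasDerivAt_const t x))).deriv

theorem pdx_eq_fderiv (hf : DifferentiableAt ℝ f (t, x)) : pdx f t x = fderiv ℝ f (t, x) (0, 1) :=
  (hf.hasFDerivAt.comp_hasDerivAt x ((hasDerivAt_const x t).prodMk (hasDerivAt_id x))).deriv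

theorem pdx_mul (hf : DifferentiableAt ℝ (fun y => f (t, y)) x)
    (hg : DifferentiableAt ℝ (fun y => g (t, y)) x) :
    pdx (fun p => f p * g p) t x = pdx f t x * g (t, x) + f (t, x) * pdx g t x :=
  deriv_fun_mul hf hg

theorem differentiableAt_pdx {p : ℝ × ℝ} (hf : ContDiffAt ℝ 2 f p) :
    DifferentiableAt ℝ (fun q => pdx f q.1 q.2) p := by
  have pdx_eventuallyEq : (fun q => pdx f q.1 q.2) =ᶠ[nhds p] fun q => fderiv ℝ f q (0, 1) :=
    (hf.eventually (by simp)).mono fun q hq => pdx_eq_fderiv (hq.differentiableAt two_ne_zero)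
  have differentiableAt_fderiv : DifferentiableAt ℝ (fderiv ℝ f) p :=
    (hf.fderiv_right (m := 1) (by norm_num)).differentiableAt one_ne_zero
  exact (differentiableAt_fderiv.clm_apply (differentiableAt_const _)).congr_of_eventuallyEq
    pdx_eventuallyEq

end PartialDerivatives

section Characteristics

variable {f ρ u : ℝ × ℝ → ℝ} {γ : ℝ → ℝ} {v F t : ℝ}

theorem hasDerivAt_along_curve (hf : DifferentiableAt ℝ f (t, γ t)) (hγ : HasDerivAt γ v t) :
    HasDerivAt (fun τ => f (τ, γ τ)) (pdt f t (γ t) + v * pdx f t (γ t)) t := by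
  have velocity_decomposition : ((1, v) : ℝ × ℝ) = (1, 0) + v • (0, 1) := by simp
  have chain_rule : HasDerivAt (fun τ => f (τ, γ τ)) (fderiv ℝ f (t, γ t) (1, v)) t :=
    hf.hasFDerivAt.comp_hasDerivAt t ((hasDerivAt_id t).prodMk hγ)
  rwa [velocity_decomposition, map_add, map_smul, smul_eq_mul, ← pdt_eq_fderiv hf,
    ← pdx_eq_fderiv hf] at chain_rule

theorem hasDerivAt_along_curve_of_advection (hf : DifferentiableAt ℝ f (t, γ t))
    (hγ : HasDerivAt γ v t) (advection : pdt f t (γ t) = -(v * pdx f t (γ t)) + F) :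
    HasDerivAt (fun τ => f (τ, γ τ)) F t :=
  (hasDerivAt_along_curve hf hγ).congr_deriv (by rw [advection]; ring)

theorem hasDerivAt_along_characteristic_of_conservation (hρ : DifferentiableAt ℝ ρ (t, γ t))
    (hu : DifferentiableAt ℝ (fun y => u (t, y)) (γ t)) (hγ : HasDerivAt γ (u (t, γ t)) t)
    (conservation : pdt ρ t (γ t) = -(pdx (fun p => ρ p * u p) t (γ t)) + F) :
    HasDerivAt (fun τ => ρ (τ, γ τ)) (-(ρ (t, γ t)) * pdx u t (γ t) + F) t := by
  have hρ_slice : DifferentiableAt ℝ (fun y => ρ (t, y)) (γ t) := by fun_prop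
  refine hasDerivAt_along_curve_of_advection hρ hγ ?_
  rw [conservation, pdx_mul hρ_slice hu]
  ring

end Characteristics

/-- Imposing the system only at the space-time point the particle occupies covers solutions that
exist only locally in time. -/
theorem stmt_0_general {s c2 δ t : ℝ} {u ρ : ℝ × ℝ → ℝ} {γ : ℝ → ℝ}
    (hu : ContDiffAt ℝ 2 u (t, γ t)) (hρ : DifferentiableAt ℝ ρ (t, γ t))
    (hPDE1 : pdt (fun p => pdx u p.1 p.2) t (γ t) =
      -(1 / 2) * (pdx u t (γ t)) ^ 2 - u (t, γ t) * pdx (fun p => pdx u p.1 p.2) t (γ t)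
        + (1 / 2) * (ρ (t, γ t)) ^ 2 - (s * ρ (t, γ t) + 2 * (c2 - s * δ)))
    (hPDE2 : pdt ρ t (γ t) = -(pdx (fun p => ρ p * u p) t (γ t)) + s * pdx u t (γ t))
    (hγ : HasDerivAt γ (u (t, γ t)) t) :
    HasDerivAt (fun τ => pdx u τ (γ τ))
      (-(1 / 2) * (pdx u t (γ t)) ^ 2 + (1 / 2) * (ρ (t, γ t)) ^ 2
        - (s * ρ (t, γ t) + 2 * (c2 - s * δ))) t ∧
    HasDerivAt (fun τ => ρ (τ, γ τ))
      (-(ρ (t, γ t)) * pdx u t (γ t) + s * pdx u t (γ t)) t := by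
  have hu_slice : DifferentiableAt ℝ (fun y => u (t, y)) (γ t) :=
    (hu.differentiableAt two_ne_zero).comp (γ t) (by fun_prop)
  exact ⟨hasDerivAt_along_curve_of_advection (differentiableAt_pdx hu) hγ (by rw [hPDE1]; ring),
    hasDerivAt_along_characteristic_of_conservation hρ hu_slice hγ hPDE2⟩

theorem stmt_0 (s c2 δ : ℝ) (u ρ : ℝ × ℝ → ℝ)
    (hu : ContDiff ℝ 2 u) (hρ : ContDiff ℝ 2 ρ)
    (hPDE1 : ∀ t x : ℝ,
      pdt (fun p => pdx u p.1 p.2) t x =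
        -(1/2) * (pdx u t x)^2 - u (t, x) * pdx (fun p => pdx u p.1 p.2) t x
          + (1/2) * (ρ (t, x))^2 - (s * ρ (t, x) + 2 * (c2 - s * δ)))
    (hPDE2 : ∀ t x : ℝ,
      pdt ρ t x = -(pdx (fun p => ρ p * u p) t x) + s * pdx u t x)
    (φ : ℝ × ℝ → ℝ)
    (hφ : ∀ t x : ℝ, HasDerivAt (fun τ => φ (τ, x)) (u (t, φ (t, x))) t)
    (hφ0 : ∀ x : ℝ, φ (0, x) = x) (x : ℝ) :
    (∀ t : ℝ, HasDerivAt (fun τ => pdx u τ (φ (τ, x)))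
      (-(1/2) * (pdx u t (φ (t, x)))^2 + (1/2) * (ρ (t, φ (t, x)))^2
        - (s * ρ (t, φ (t, x)) + 2 * (c2 - s * δ))) t) ∧
    (∀ t : ℝ, HasDerivAt (fun τ => ρ (τ, φ (τ, x)))
      (-(ρ (t, φ (t, x))) * pdx u t (φ (t, x)) + s * pdx u t (φ (t, x))) t) ∧
    pdx u 0 (φ (0, x)) = pdx u 0 x ∧ ρ (0, φ (0, x)) = ρ (0, x) := by
  have lagrangian_equations (t : ℝ) := stmt_0_general (γ := fun τ => φ (τ, x)) hu.contDiffAt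
    (hρ.differentiable two_ne_zero _) (hPDE1 t _) (hPDE2 t _) (hφ t x)
  exact ⟨fun t => (lagrangian_equations t).1, fun t => (lagrangian_equations t).2,
    by rw [hφ0], by rw [hφ0]⟩
end

section
/- Let κ > 0 be real and let W₀ ∈ ℂ with Im W₀ ≠ 0. Then the denominator κ·cos(κt/2) + W₀·sin(κt/2) is nonzero for every t ∈ ℝ, and the function W : ℝ → ℂ defined by W(t) := κ·(W₀·cos(κt/2) - κ·sin(κt/2)) / (κ·cos(κt/2) + W₀·sin(κt/2)) is differentiable on all of ℝ, satisfies W'(t) = -(1/2)(W(t)² + κ²) for all t ∈ ℝ, and W(0) = W₀. -/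
/-- The explicit solution of the complex Riccati equation `W' = -(1/2)(W² + κ²)`. -/
noncomputable def Wsol (κ : ℝ) (W₀ : ℂ) (t : ℝ) : ℂ :=
  (κ : ℂ) * (W₀ * (Real.cos (κ * t / 2) : ℝ) - (κ : ℂ) * (Real.sin (κ * t / 2) : ℝ)) /
    ((κ : ℂ) * (Real.cos (κ * t / 2) : ℝ) + W₀ * (Real.sin (κ * t / 2) : ℝ))

/-!
The Riccati equation is linearized by `W = 2 u' / u`: if `u'' = q u`, then `y = u' / u` satisfies
`y' = q - y²`. Here `q = -(κ / 2)²` and `u(t) = κ cos (κt/2) + W₀ sin (κt/2)`, which never vanishes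
because `κ` and `W₀` are linearly independent over `ℝ` and the cosine and the sine of an angle are
never both zero.
-/

theorem hasDerivAt_div_of_linear_ode {𝕜 𝕜' : Type*} [NontriviallyNormedField 𝕜]
    [NontriviallyNormedField 𝕜'] [NormedAlgebra 𝕜 𝕜'] {u v : 𝕜 → 𝕜'} {q : 𝕜'} {t : 𝕜}
    (hu : HasDerivAt u (v t) t) (hv : HasDerivAt v (q * u t) t) (h₀ : u t ≠ 0) :
    HasDerivAt (fun s ↦ v s / u s) (q - (v t / u t) ^ 2) t := by
  refine (hv.fun_div hu h₀).congr_deriv ?_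
  field_simp

section Sinusoid

section Module

variable {E : Type*} [AddCommGroup E] [Module ℝ E]

/-- The sinusoid of angular frequency `ω` with vector coefficients `a` (of the cosine) and `b` (of
the sine). For `ω = κ / 2`, `a = κ` and `b = W₀` it is the denominator of `Wsol`. -/
noncomputable def sinusoid (ω : ℝ) (a b : E) (t : ℝ) : E :=
  Real.cos (ω * t) • a + Real.sin (ω * t) • b

theorem sinusoid_ne_zero {a b : E} (hab : LinearIndependent ℝ ![a, b]) (ω t : ℝ) :
    sinusoid ω a b t ≠ 0 := by
  intro h
  obtain ⟨hcos, hsin⟩ := LinearIndependent.pair_iff.mp hab _ _ h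
  simpa [hcos, hsin] using Real.sin_sq_add_cos_sq (ω * t)

end Module

variable {E : Type*} [NormedAddCommGroup E] [NormedSpace ℝ E] (ω : ℝ) (a b : E) (t : ℝ)

theorem hasDerivAt_sinusoid :
    HasDerivAt (sinusoid ω a b) (sinusoid ω (ω • b) (-(ω • a)) t) t := by
  have hphase : HasDerivAt (fun s ↦ ω * s) ω t := hasDerivAt_const_mul ω
  refine ((hphase.cos.smul_const a).add (hphase.sin.smul_const b)).congr_deriv ?_
  simp only [sinusoid]
  module

theorem hasDerivAt_deriv_sinusoid :
    HasDerivAt (sinusoid ω (ω • b) (-(ω • a))) (-ω ^ 2 • sinusoid ω a b t) t := by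
  refine (hasDerivAt_sinusoid ω (ω • b) (-(ω • a)) t).congr_deriv ?_
  simp only [sinusoid]
  module

end Sinusoid

theorem linearIndependent_ofReal_of_im_ne_zero {x : ℝ} {z : ℂ} (hx : x ≠ 0) (hz : z.im ≠ 0) :
    LinearIndependent ℝ ![(x : ℂ), z] := by
  refine LinearIndependent.pair_iff.mpr fun r s h ↦ ?_
  have hs : s = 0 := by simpa [hz] using congrArg Complex.im h
  have hr : r = 0 := by simpa [hs, hx] using h
  exact ⟨hr, hs⟩

section Riccati

variable (κ : ℝ) (W₀ : ℂ) (t : ℝ)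

theorem sinusoid_half_eq :
    sinusoid (κ / 2) (κ : ℂ) W₀ t =
      (κ : ℂ) * (Real.cos (κ * t / 2) : ℝ) + W₀ * (Real.sin (κ * t / 2) : ℝ) := by
  simp only [sinusoid, Complex.real_smul, div_mul_eq_mul_div]
  ring

theorem Wsol_eq_two_mul_div :
    Wsol κ W₀ t =
      2 * (sinusoid (κ / 2) ((κ / 2) • W₀) (-((κ / 2) • (κ : ℂ))) t /
        sinusoid (κ / 2) (κ : ℂ) W₀ t) := by
  rw [sinusoid_half_eq, Wsol, ← mul_div_assoc]
  congr 1
  simp only [sinusoid, Complex.real_smul, div_mul_eq_mul_div]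
  push_cast
  ring

variable {κ W₀ t}

theorem hasDerivAt_Wsol (h₀ : sinusoid (κ / 2) (κ : ℂ) W₀ t ≠ 0) :
    HasDerivAt (Wsol κ W₀) (-(1 / 2) * (Wsol κ W₀ t ^ 2 + ((κ ^ 2 : ℝ) : ℂ))) t := by
  have hu := hasDerivAt_sinusoid (κ / 2) (κ : ℂ) W₀ t
  have hv := hasDerivAt_deriv_sinusoid (κ / 2) (κ : ℂ) W₀ t
  rw [Complex.real_smul (x := -(κ / 2) ^ 2)] at hv
  have hW := (hasDerivAt_div_of_linear_ode hu hv h₀).const_mul 2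
  rw [Wsol_eq_two_mul_div, funext (Wsol_eq_two_mul_div κ W₀)]
  refine hW.congr_deriv ?_
  push_cast
  ring

theorem Wsol_zero (hκ : κ ≠ 0) : Wsol κ W₀ 0 = W₀ := by
  simp [Wsol, hκ]

end Riccati

theorem stmt_3 (κ : ℝ) (hκ : 0 < κ) (W₀ : ℂ) (hW₀ : W₀.im ≠ 0) :
    (∀ t : ℝ, (κ : ℂ) * (Real.cos (κ * t / 2) : ℝ) + W₀ * (Real.sin (κ * t / 2) : ℝ) ≠ 0) ∧
    (∀ t : ℝ, HasDerivAt (Wsol κ W₀) (-(1/2) * ((Wsol κ W₀ t)^2 + ((κ^2 : ℝ) : ℂ))) t) ∧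
    Wsol κ W₀ 0 = W₀ := by
  have hu : ∀ t, sinusoid (κ / 2) (κ : ℂ) W₀ t ≠ 0 :=
    sinusoid_ne_zero (linearIndependent_ofReal_of_im_ne_zero hκ.ne' hW₀) (κ / 2)
  exact ⟨fun t ↦ sinusoid_half_eq κ W₀ t ▸ hu t, fun t ↦ hasDerivAt_Wsol (hu t),
    Wsol_zero hκ.ne'⟩
end

section
/- Let s ∈ ℝ, κ > 0, and a, b ∈ ℝ, and set W₀ := a + i(b - s) ∈ ℂ. Then there exists t₀ > 0 such that κ·cos(κt₀/2) + W₀·sin(κt₀/2) = 0 if and only if b = s and a, κ admit such a zero; more precisely: if b ≠ s then κ·cos(κt/2) + W₀·sin(κt/2) ≠ 0 for all t ∈ ℝ, while if b = s then the smallest positive zero is t₀ = (2/κ)·arccot(-a/κ), i.e. the unique t₀ with κ·t₀/2 ∈ (0, π) and cot(κ·t₀/2) = -a/κ. -/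
/-!
Since the real number `κ` is nonzero, `κ cos x + W sin x` cannot vanish where `sin x` does; so it
vanishes exactly when `W = -κ cot x`, which forces `W` to be real. For real `W` the first positive
zero is `x = arccot (-W / κ)`, because `cot` maps `(0, π)` bijectively onto `ℝ`.
-/

section

open Real Set

/-- The inverse cotangent with values in `(0, π)`, as opposed to the branch `x ↦ arctan x⁻¹`. -/
noncomputable def arccot (y : ℝ) : ℝ := π / 2 - arctan y

theorem arccot_mem_Ioo (y : ℝ) : arccot y ∈ Ioo 0 π := by
  have hlower := neg_pi_div_two_lt_arctan y
  have hupper := arctan_lt_pi_div_two y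
  constructor <;> unfold arccot <;> linarith

theorem tan_pi_div_two_sub_eq_cot (x : ℝ) : tan (π / 2 - x) = cot x := by
  rw [tan_pi_div_two_sub, ← cot_inv_eq_tan, inv_inv]

theorem cot_arccot (y : ℝ) : cot (arccot y) = y := by
  rw [← tan_pi_div_two_sub_eq_cot, arccot, sub_sub_cancel, tan_arctan]

theorem arccot_cot {x : ℝ} (hx : x ∈ Ioo 0 π) : arccot (cot x) = x := by
  rw [arccot, ← tan_pi_div_two_sub_eq_cot,
    arctan_tan (by linarith [hx.2]) (by linarith [hx.1]), sub_sub_cancel]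

theorem cot_eq_iff_eq_arccot {x y : ℝ} (hx : x ∈ Ioo 0 π) : cot x = y ↔ x = arccot y := by
  constructor
  · rintro rfl
    exact (arccot_cot hx).symm
  · rintro rfl
    exact cot_arccot y

-- The junk value `cot (n * π) = 0` is harmless: it occurs only beyond `arccot y < π`.
theorem isLeast_arccot (y : ℝ) : IsLeast {x | 0 < x ∧ cot x = y} (arccot y) := by
  refine ⟨⟨(arccot_mem_Ioo y).1, cot_arccot y⟩, ?_⟩
  rintro x ⟨hx, hcot⟩
  rcases lt_or_ge x π with hxπ | hπx
  · exact ((cot_eq_iff_eq_arccot ⟨hx, hxπ⟩).mp hcot).ge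
  · exact (arccot_mem_Ioo y).2.le.trans hπx

theorem mul_cos_add_mul_sin_eq_zero_iff {κ : ℝ} (hκ : κ ≠ 0) (W : ℂ) (x : ℝ) :
    (κ : ℂ) * (cos x : ℝ) + W * (sin x : ℝ) = 0 ↔
      sin x ≠ 0 ∧ cot x = -W.re / κ ∧ W.im = 0 := by
  have re_im : (κ : ℂ) * (cos x : ℝ) + W * (sin x : ℝ) = 0 ↔
      κ * cos x + W.re * sin x = 0 ∧ W.im * sin x = 0 := by
    simp [Complex.ext_iff, -Complex.ofReal_cos, -Complex.ofReal_sin]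
  rw [re_im]
  by_cases hsin : sin x = 0
  · have hcos : cos x ≠ 0 := fun hcos => by simpa [hsin, hcos] using sin_sq_add_cos_sq x
    simp [hsin, hκ, hcos]
  · rw [cot_eq_cos_div_sin, div_eq_div_iff hsin hκ, mul_eq_zero_iff_right hsin, neg_mul,
      eq_neg_iff_add_eq_zero, mul_comm (cos x)]
    simp only [ne_eq, hsin, not_false_eq_true, true_and]

theorem isLeast_pos_mul_cos_add_mul_sin_eq_zero {κ ω : ℝ} (hκ : κ ≠ 0) (hω : 0 < ω) {W : ℂ}
    (hW : W.im = 0) :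
    IsLeast {t : ℝ | 0 < t ∧ (κ : ℂ) * (cos (ω * t) : ℝ) + W * (sin (ω * t) : ℝ) = 0}
      (arccot (-W.re / κ) / ω) := by
  have hx := arccot_mem_Ioo (-W.re / κ)
  constructor
  · refine ⟨div_pos hx.1 hω, ?_⟩
    rw [mul_div_cancel₀ _ hω.ne', mul_cos_add_mul_sin_eq_zero_iff hκ]
    exact ⟨(sin_pos_of_mem_Ioo hx).ne', cot_arccot _, hW⟩
  · rintro t ⟨ht, hzero⟩
    obtain ⟨-, hcot, -⟩ := (mul_cos_add_mul_sin_eq_zero_iff hκ W _).mp hzero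
    rw [div_le_iff₀' hω]
    exact (isLeast_arccot _).2 ⟨mul_pos hω ht, hcot⟩

end

theorem stmt_5 (s κ a b : ℝ) (hκ : 0 < κ) :
    (b ≠ s → ∀ t : ℝ,
      (κ : ℂ) * (Real.cos (κ * t / 2) : ℝ)
        + ((a : ℂ) + Complex.I * ((b : ℂ) - (s : ℂ))) * (Real.sin (κ * t / 2) : ℝ) ≠ 0) ∧
    (b = s → ∃ t₀ : ℝ,
      IsLeast {t : ℝ | 0 < t ∧
        (κ : ℂ) * (Real.cos (κ * t / 2) : ℝ)
          + ((a : ℂ) + Complex.I * ((b : ℂ) - (s : ℂ))) * (Real.sin (κ * t / 2) : ℝ) = 0} t₀ ∧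
      κ * t₀ / 2 ∈ Set.Ioo 0 Real.pi ∧ Real.cot (κ * t₀ / 2) = -a / κ ∧
      (∀ t : ℝ, κ * t / 2 ∈ Set.Ioo 0 Real.pi → Real.cot (κ * t / 2) = -a / κ → t = t₀)) := by
  set W : ℂ := (a : ℂ) + Complex.I * ((b : ℂ) - (s : ℂ)) with hW
  have re_W : W.re = a := by simp [hW]
  have im_W : W.im = b - s := by simp [hW]
  have hω : 0 < κ / 2 := half_pos hκ
  simp only [mul_div_right_comm κ _ 2]
  refine ⟨fun hbs t hzero => ?_, fun hbs => ⟨arccot (-a / κ) / (κ / 2), ?_⟩⟩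
  · obtain ⟨-, -, him⟩ := (mul_cos_add_mul_sin_eq_zero_iff hκ.ne' W _).mp hzero
    exact hbs (sub_eq_zero.mp (im_W ▸ him))
  · rw [mul_div_cancel₀ _ hω.ne']
    refine ⟨?_, arccot_mem_Ioo _, cot_arccot _, fun t ht hcot => ?_⟩
    · rw [← re_W]
      exact isLeast_pos_mul_cos_add_mul_sin_eq_zero hκ.ne' hω (by rw [im_W, hbs, sub_self])
    · rw [eq_div_iff hω.ne', mul_comm]
      exact (cot_eq_iff_eq_arccot ht).mp hcot
end

section
/- Let s, δ ∈ ℝ with s² + 4(1 - sδ) > 0 and set κ := √(s² + 4(1 - sδ)). Let a, b ∈ ℝ and define, for t in a neighborhood of 0 where cos(κt/2) ≠ 0 and D(t) > 0, T(t) := tan(κt/2), D(t) := (1 + a·T(t)/κ)² + ((b - s)·T(t)/κ)², U(t) := [(-κ·T(t) + a)(1 + a·T(t)/κ) + (b - s)²·T(t)/κ] / D(t), and P(t) := s + (1 + T(t)²)(b - s)/D(t). Then Z := U + iP satisfies the Riccati equation Z' = -(1/2)Z² + isZ - 2(1 - sδ) with Z(0) = a + ib. -/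
/-- `T(t) = tan(κt/2)`. -/
noncomputable def Tfun (κ t : ℝ) : ℝ := Real.tan (κ * t / 2)

/-- The denominator `D(t)` of the explicit solution formula. -/
noncomputable def Dfun (κ s a b t : ℝ) : ℝ :=
  (1 + a * Tfun κ t / κ)^2 + ((b - s) * Tfun κ t / κ)^2

/-- Explicit formula for `u_x` along the Lagrangian flow. -/
noncomputable def Ufun (κ s a b t : ℝ) : ℝ :=
  ((-(κ * Tfun κ t) + a) * (1 + a * Tfun κ t / κ) + (b - s)^2 * Tfun κ t / κ) / Dfun κ s a b t

/-- Explicit formula for `ρ` along the Lagrangian flow. -/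
noncomputable def Pfun (κ s a b t : ℝ) : ℝ :=
  s + (1 + (Tfun κ t)^2) * (b - s) / Dfun κ s a b t

/-!
Put `Z = is + κV`. Since `κ² = s² + 4(1 - sδ)`, the Riccati equation for `Z` becomes
`V' = -(κ/2)(1 + V²)`, which `V = tan (α - κt/2)` solves. The subtraction formula
`tan (α - κt/2) = (v - T) / (1 + vT)`, `v = tan α`, keeps making sense, and keeps solving the
equation, for every complex `v` with `1 + vT ≠ 0`. For `v = (a + i(b - s)) / κ` one has
`D = |1 + vT|²`, and `U` and `P` are the real and imaginary parts of `is + κV`.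
-/

section Riccati

variable {𝕜 𝕂 : Type*} [NontriviallyNormedField 𝕜] [NontriviallyNormedField 𝕂]
  [NormedAlgebra 𝕜 𝕂] {x : 𝕜}

theorem hasDerivAt_sub_div_one_add_mul {f : 𝕜 → 𝕂} {c v : 𝕂}
    (hf : HasDerivAt f (c * (1 + f x ^ 2)) x) (hne : 1 + v * f x ≠ 0) :
    HasDerivAt (fun y ↦ (v - f y) / (1 + v * f y))
      (-c * (1 + ((v - f x) / (1 + v * f x)) ^ 2)) x := by
  have hnum : HasDerivAt (fun y ↦ v - f y) (-(c * (1 + f x ^ 2))) x := hf.const_sub v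
  have hden : HasDerivAt (fun y ↦ 1 + v * f y) (v * (c * (1 + f x ^ 2))) x :=
    (hf.const_mul v).const_add 1
  refine (hnum.div hden hne).congr_deriv ?_
  rw [div_pow, one_add_div (pow_ne_zero 2 hne)]
  ring

theorem hasDerivAt_riccati_of_reduced [NeZero (2 : 𝕂)] {V : 𝕜 → 𝕂} {κ p q : 𝕂}
    (hκ : κ ^ 2 = 2 * q - p ^ 2) (hV : HasDerivAt V (-(κ / 2) * (1 + V x ^ 2)) x) :
    HasDerivAt (fun y ↦ p + κ * V y)
      (-(1 / 2) * (p + κ * V x) ^ 2 + p * (p + κ * V x) - q) x := by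
  have h2 : (2 : 𝕂) ≠ 0 := two_ne_zero
  refine ((hV.const_mul κ).const_add p).congr_deriv ?_
  field_simp
  linear_combination -hκ

end Riccati

theorem hasDerivAt_Tfun {κ t : ℝ} (hcos : Real.cos (κ * t / 2) ≠ 0) :
    HasDerivAt (Tfun κ) (κ / 2 * (1 + Tfun κ t ^ 2)) t := by
  have hangle : HasDerivAt (fun τ ↦ κ * τ / 2) (κ / 2) t := by
    simpa using ((hasDerivAt_id t).const_mul κ).div_const 2
  have hsec : 1 / Real.cos (κ * t / 2) ^ 2 = 1 + Tfun κ t ^ 2 := by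
    rw [Tfun, one_div, ← Real.inv_one_add_tan_sq hcos, inv_inv]
  refine ((Real.hasDerivAt_tan hcos).comp t hangle).congr_deriv ?_
  rw [hsec, mul_comm]

/-- The initial value `v = (a + ib - is) / κ` of the reduced unknown `V = (Z - is) / κ`. -/
noncomputable def reducedInit (κ s a b : ℝ) : ℂ := ⟨a / κ, (b - s) / κ⟩

/-- The reduced unknown `V = (Z - is) / κ`, written as the Möbius transform `(v - T) / (1 + vT)` of
`T`, where `v` is `reducedInit`. -/
noncomputable def reducedSol (κ s a b t : ℝ) : ℂ :=
  (reducedInit κ s a b - Tfun κ t) / (1 + reducedInit κ s a b * Tfun κ t)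

theorem normSq_one_add_reducedInit_mul_Tfun (κ s a b t : ℝ) :
    Complex.normSq (1 + reducedInit κ s a b * Tfun κ t) = Dfun κ s a b t := by
  simp only [Complex.normSq_apply, reducedInit, Dfun, Complex.add_re, Complex.add_im,
    Complex.one_re, Complex.one_im, Complex.re_mul_ofReal, Complex.im_mul_ofReal]
  ring

theorem Ufun_add_I_mul_Pfun {κ : ℝ} (hκ : κ ≠ 0) (s a b t : ℝ) :
    (Ufun κ s a b t : ℂ) + Complex.I * (Pfun κ s a b t : ℝ) =
      Complex.I * s + κ * reducedSol κ s a b t := by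
  have hre : Ufun κ s a b t = κ * (reducedSol κ s a b t).re := by
    simp only [Ufun, reducedSol, Complex.div_re, normSq_one_add_reducedInit_mul_Tfun]
    simp only [reducedInit, Complex.add_re, Complex.add_im, Complex.sub_re, Complex.sub_im,
      Complex.one_re, Complex.one_im, Complex.ofReal_re, Complex.ofReal_im, Complex.re_mul_ofReal,
      Complex.im_mul_ofReal]
    field_simp
    ring
  have him : Pfun κ s a b t = s + κ * (reducedSol κ s a b t).im := by
    simp only [Pfun, reducedSol, Complex.div_im, normSq_one_add_reducedInit_mul_Tfun]
    simp only [reducedInit, Complex.add_re, Complex.add_im, Complex.sub_re, Complex.sub_im,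
      Complex.one_re, Complex.one_im, Complex.ofReal_re, Complex.ofReal_im, Complex.re_mul_ofReal,
      Complex.im_mul_ofReal]
    field_simp
    ring
  apply Complex.ext <;> simp [hre, him]

theorem hasDerivAt_reducedSol {κ s a b t : ℝ} (hcos : Real.cos (κ * t / 2) ≠ 0)
    (hD : 0 < Dfun κ s a b t) :
    HasDerivAt (reducedSol κ s a b) (-(κ / 2) * (1 + reducedSol κ s a b t ^ 2)) t := by
  have hne : 1 + reducedInit κ s a b * Tfun κ t ≠ 0 := by
    rwa [← Complex.normSq_pos, normSq_one_add_reducedInit_mul_Tfun]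
  have hT : HasDerivAt (fun τ ↦ (Tfun κ τ : ℂ)) (κ / 2 * (1 + (Tfun κ t : ℂ) ^ 2)) t :=
    mod_cast (hasDerivAt_Tfun hcos).ofReal_comp
  exact hasDerivAt_sub_div_one_add_mul hT hne

theorem stmt_6 (s δ a b κ : ℝ) (hpos : 0 < s^2 + 4 * (1 - s * δ))
    (hκ : κ = Real.sqrt (s^2 + 4 * (1 - s * δ))) :
    ((Ufun κ s a b 0 : ℂ) + Complex.I * (Pfun κ s a b 0 : ℝ) = (a : ℂ) + Complex.I * (b : ℂ)) ∧
    ∀ t : ℝ, Real.cos (κ * t / 2) ≠ 0 → 0 < Dfun κ s a b t →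
      HasDerivAt (fun τ => (Ufun κ s a b τ : ℂ) + Complex.I * (Pfun κ s a b τ : ℝ))
        (-(1/2) * ((Ufun κ s a b t : ℂ) + Complex.I * (Pfun κ s a b t : ℝ))^2
          + Complex.I * (s : ℂ) * ((Ufun κ s a b t : ℂ) + Complex.I * (Pfun κ s a b t : ℝ))
          - 2 * ((1 : ℂ) - (s : ℂ) * (δ : ℂ))) t := by
  have hκ_ne : κ ≠ 0 := hκ ▸ (Real.sqrt_pos.mpr hpos).ne'
  have hκ_sq : κ ^ 2 = s ^ 2 + 4 * (1 - s * δ) := hκ ▸ Real.sq_sqrt hpos.le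
  have hκ_reduced : (κ : ℂ) ^ 2 = 2 * (2 * (1 - s * δ)) - (Complex.I * s) ^ 2 := by
    rw [mul_pow, Complex.I_sq, ← Complex.ofReal_pow, hκ_sq]
    push_cast
    ring
  refine ⟨by simp [Ufun, Pfun, Dfun, Tfun], fun t hcos hD ↦ ?_⟩
  simp only [Ufun_add_I_mul_Pfun hκ_ne]
  exact hasDerivAt_riccati_of_reduced hκ_reduced (hasDerivAt_reducedSol hcos hD)
end

section
/- Let s, c2, δ ∈ ℝ and let f, g : I → ℝ be twice differentiable on an open interval I with f'' + s·g' + (c2 - sδ)·f = 0 and g'' - s·f' + (c2 - sδ)·g = 0, and f(t)² + g(t)² > 0 on I. Define U(t) := 2(f(t)f'(t) + g(t)g'(t))/(f(t)² + g(t)²) and P(t) := 2(f(t)g'(t) - f'(t)g(t))/(f(t)² + g(t)²). Then U' = -(1/2)U² + (1/2)P² - (sP + 2(c2 - sδ)) and P' = (s - P)·U on I. -/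
/-!
The complex curve `γ = f + i g` satisfies `γ'' = i s γ' - q γ` with `q = c2 - s δ`, so its
logarithmic derivative `w = γ' / γ` satisfies the Riccati equation `w' = i s w - q - w²`. Since
`U + i P = 2 w`, the two claims are the real and imaginary parts of this equation.
-/

theorem hasDerivAt_div_of_linear_ode_s10 {𝕜 𝕜' : Type*} [NontriviallyNormedField 𝕜]
    [NontriviallyNormedField 𝕜'] [NormedAlgebra 𝕜 𝕜'] {γ γ' : 𝕜 → 𝕜'} {a b : 𝕜'} {t : 𝕜}
    (hγ : HasDerivAt γ (γ' t) t) (hγ' : HasDerivAt γ' (a * γ' t - b * γ t) t) (h₀ : γ t ≠ 0) :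
    HasDerivAt (fun τ => γ' τ / γ τ) (a * (γ' t / γ t) - b - (γ' t / γ t) ^ 2) t := by
  refine (hγ'.fun_div hγ h₀).congr_deriv ?_
  field_simp

theorem hasDerivAt_complex_mk {f g : ℝ → ℝ} {f' g' t : ℝ} (hf : HasDerivAt f f' t)
    (hg : HasDerivAt g g' t) : HasDerivAt (fun τ => (⟨f τ, g τ⟩ : ℂ)) ⟨f', g'⟩ t :=
  Complex.equivRealProdCLM.symm.hasFDerivAt.comp_hasDerivAt t (hf.prodMk hg)

theorem hasDerivAt_complex_re {w : ℝ → ℂ} {w' : ℂ} {t : ℝ} (hw : HasDerivAt w w' t) :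
    HasDerivAt (fun τ => (w τ).re) w'.re t :=
  Complex.reCLM.hasFDerivAt.comp_hasDerivAt t hw

theorem hasDerivAt_complex_im {w : ℝ → ℂ} {w' : ℂ} {t : ℝ} (hw : HasDerivAt w w' t) :
    HasDerivAt (fun τ => (w τ).im) w'.im t :=
  Complex.imCLM.hasFDerivAt.comp_hasDerivAt t hw

theorem complex_mk_div_mk_re (a b a' b' : ℝ) :
    ((⟨a', b'⟩ : ℂ) / ⟨a, b⟩).re = (a * a' + b * b') / (a ^ 2 + b ^ 2) := by
  rw [Complex.div_re, Complex.normSq_mk]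
  ring

theorem complex_mk_div_mk_im (a b a' b' : ℝ) :
    ((⟨a', b'⟩ : ℂ) / ⟨a, b⟩).im = (a * b' - a' * b) / (a ^ 2 + b ^ 2) := by
  rw [Complex.div_im, Complex.normSq_mk]
  ring

theorem hasDerivAt_complex_logDeriv_of_coupled_ode {s q t : ℝ} {f g f' g' : ℝ → ℝ}
    (hf : HasDerivAt f (f' t) t) (hg : HasDerivAt g (g' t) t)
    (hf' : HasDerivAt f' (-(s * g' t) - q * f t) t) (hg' : HasDerivAt g' (s * f' t - q * g t) t)
    (h₀ : f t ^ 2 + g t ^ 2 ≠ 0) :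
    HasDerivAt (fun τ => (⟨f' τ, g' τ⟩ : ℂ) / ⟨f τ, g τ⟩)
      (s * Complex.I * (⟨f' t, g' t⟩ / ⟨f t, g t⟩) - q - (⟨f' t, g' t⟩ / ⟨f t, g t⟩) ^ 2) t := by
  have hγ₀ : (⟨f t, g t⟩ : ℂ) ≠ 0 := by
    rwa [ne_eq, ← Complex.normSq_eq_zero.not, Complex.normSq_mk, ← sq, ← sq]
  have hγ' : HasDerivAt (fun τ => (⟨f' τ, g' τ⟩ : ℂ))
      (s * Complex.I * ⟨f' t, g' t⟩ - q * ⟨f t, g t⟩) t := by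
    refine (hasDerivAt_complex_mk hf' hg').congr_deriv (Complex.ext ?_ ?_) <;> simp
  exact hasDerivAt_div_of_linear_ode_s10 (hasDerivAt_complex_mk hf hg) hγ' hγ₀

theorem stmt_10_general {s q t : ℝ} {f g f' g' : ℝ → ℝ}
    (hf : HasDerivAt f (f' t) t) (hg : HasDerivAt g (g' t) t)
    (hf' : HasDerivAt f' (-(s * g' t) - q * f t) t) (hg' : HasDerivAt g' (s * f' t - q * g t) t)
    (h₀ : f t ^ 2 + g t ^ 2 ≠ 0) :
    HasDerivAt (fun τ => 2 * (f τ * f' τ + g τ * g' τ) / (f τ ^ 2 + g τ ^ 2))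
      (-(1 / 2) * (2 * (f t * f' t + g t * g' t) / (f t ^ 2 + g t ^ 2)) ^ 2
        + (1 / 2) * (2 * (f t * g' t - f' t * g t) / (f t ^ 2 + g t ^ 2)) ^ 2
        - (s * (2 * (f t * g' t - f' t * g t) / (f t ^ 2 + g t ^ 2)) + 2 * q)) t ∧
    HasDerivAt (fun τ => 2 * (f τ * g' τ - f' τ * g τ) / (f τ ^ 2 + g τ ^ 2))
      ((s - 2 * (f t * g' t - f' t * g t) / (f t ^ 2 + g t ^ 2))
        * (2 * (f t * f' t + g t * g' t) / (f t ^ 2 + g t ^ 2))) t := by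
  have riccati := hasDerivAt_complex_logDeriv_of_coupled_ode hf hg hf' hg' h₀
  simp only [mul_div_assoc, ← complex_mk_div_mk_re, ← complex_mk_div_mk_im]
  constructor
  · refine ((hasDerivAt_complex_re riccati).const_mul 2).congr_deriv ?_
    simp only [Complex.sub_re, Complex.mul_re, Complex.mul_im, Complex.ofReal_re, Complex.ofReal_im,
      Complex.I_re, Complex.I_im, pow_two]
    ring
  · refine ((hasDerivAt_complex_im riccati).const_mul 2).congr_deriv ?_
    simp only [Complex.sub_im, Complex.mul_re, Complex.mul_im, Complex.ofReal_re, Complex.ofReal_im,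
      Complex.I_re, Complex.I_im, pow_two]
    ring

theorem stmt_10 (s c2 δ A B : ℝ) (f g f' g' : ℝ → ℝ)
    (hf : ∀ t ∈ Set.Ioo A B, HasDerivAt f (f' t) t)
    (hg : ∀ t ∈ Set.Ioo A B, HasDerivAt g (g' t) t)
    (hf'' : ∀ t ∈ Set.Ioo A B, HasDerivAt f' (-(s * g' t) - (c2 - s * δ) * f t) t)
    (hg'' : ∀ t ∈ Set.Ioo A B, HasDerivAt g' (s * f' t - (c2 - s * δ) * g t) t)
    (hpos : ∀ t ∈ Set.Ioo A B, 0 < (f t)^2 + (g t)^2) :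
    ∀ t ∈ Set.Ioo A B,
      HasDerivAt (fun τ => 2 * (f τ * f' τ + g τ * g' τ) / ((f τ)^2 + (g τ)^2))
        (-(1/2) * (2 * (f t * f' t + g t * g' t) / ((f t)^2 + (g t)^2))^2
          + (1/2) * (2 * (f t * g' t - f' t * g t) / ((f t)^2 + (g t)^2))^2
          - (s * (2 * (f t * g' t - f' t * g t) / ((f t)^2 + (g t)^2))
              + 2 * (c2 - s * δ))) t ∧
      HasDerivAt (fun τ => 2 * (f τ * g' τ - f' τ * g τ) / ((f τ)^2 + (g τ)^2))
        ((s - 2 * (f t * g' t - f' t * g t) / ((f t)^2 + (g t)^2))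
          * (2 * (f t * f' t + g t * g' t) / ((f t)^2 + (g t)^2))) t := fun t ht =>
  stmt_10_general (hf t ht) (hg t ht) (hf'' t ht) (hg'' t ht) (hpos t ht).ne'
end

section
/- Let (X, μ) be a measure space with μ a σ-finite measure, let θ₁, θ₂ ∈ ℝ with θ₁ ≠ θ₂, and let p₁, p₂ : X → ℂ be measurable functions such that (p₁(x), p₂(x)) ≠ (0, 0) for μ-almost every x. Then for Lebesgue-almost every t ∈ ℝ, the set { x ∈ X : e^{iθ₁t}·p₁(x) + e^{iθ₂t}·p₂(x) = 0 } has μ-measure zero. -/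
/-!
For almost every `x` the relation `e^{az} p₁(x) + e^{bz} p₂(x) = 0` forces
`e^{(a-b)z} = -p₂(x) / p₁(x)`. The level sets of `-p₂ / p₁` are disjoint, so for an s-finite
measure only countably many of them have positive measure; and `z ↦ e^{(a-b)z}` takes each value
only countably often. Hence the exceptional set of `z` is not merely null but countable.
-/

open MeasureTheory

theorem countable_setOf_measure_mul_add_eq_zero_ne_zero {X K : Type*} [MeasurableSpace X]
    {μ : Measure X} [SFinite μ] [DivisionRing K] [MeasurableSpace K] [MeasurableSingletonClass K]
    [MeasurableNeg K] [MeasurableDiv₂ K] {p q : X → K} (hp : AEMeasurable p μ)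
    (hq : AEMeasurable q μ) (hpq : ∀ᵐ x ∂μ, (p x, q x) ≠ (0, 0)) :
    {c : K | μ {x | c * p x + q x = 0} ≠ 0}.Countable := by
  have level_sets_countable : {c : K | 0 < μ {x | (-q x) / p x = c}}.Countable :=
    Measure.countable_meas_level_set_pos₀ (hq.neg.div hp).nullMeasurable
  refine level_sets_countable.mono fun c hc ↦ (pos_iff_ne_zero.2 hc).trans_le <|
    measure_mono_ae ?_
  filter_upwards [hpq] with x hx (hzero : c * p x + q x = 0)
  have hpx : p x ≠ 0 := fun h ↦ hx <| by simpa [h] using hzero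
  exact (eq_div_of_mul_eq hpx (eq_neg_of_add_eq_zero_left hzero)).symm

theorem countable_setOf_exp_mul_mem {s : Set ℂ} (hs : s.Countable) {c : ℂ} (hc : c ≠ 0) :
    {z : ℂ | Complex.exp (c * z) ∈ s}.Countable :=
  hs.preimage_cexp.preimage (mul_right_injective₀ hc)

theorem exp_mul_add_exp_mul_eq_zero_iff (a b z u v : ℂ) :
    Complex.exp (a * z) * u + Complex.exp (b * z) * v = 0 ↔
      Complex.exp ((a - b) * z) * u + v = 0 := by
  have factor : Complex.exp (a * z) * u + Complex.exp (b * z) * v =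
      Complex.exp (b * z) * (Complex.exp ((a - b) * z) * u + v) := by
    rw [mul_add, ← mul_assoc, ← Complex.exp_add]
    ring_nf
  rw [factor, mul_eq_zero_iff_left (Complex.exp_ne_zero _)]

theorem stmt_14_general {X : Type*} [MeasurableSpace X] {μ : Measure X} [SFinite μ] {a b : ℂ}
    (hab : a ≠ b) {p₁ p₂ : X → ℂ} (hp₁ : AEMeasurable p₁ μ) (hp₂ : AEMeasurable p₂ μ)
    (hne : ∀ᵐ x ∂μ, (p₁ x, p₂ x) ≠ (0, 0)) :
    {z : ℂ |
      μ {x | Complex.exp (a * z) * p₁ x + Complex.exp (b * z) * p₂ x = 0} ≠ 0}.Countable := by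
  simp only [exp_mul_add_exp_mul_eq_zero_iff]
  exact countable_setOf_exp_mul_mem
    (countable_setOf_measure_mul_add_eq_zero_ne_zero hp₁ hp₂ hne) (sub_ne_zero.2 hab)

theorem stmt_14 {X : Type*} [MeasurableSpace X] (μ : MeasureTheory.Measure X)
    [MeasureTheory.SigmaFinite μ]
    (θ₁ θ₂ : ℝ) (hθ : θ₁ ≠ θ₂) (p₁ p₂ : X → ℂ)
    (hm₁ : Measurable p₁) (hm₂ : Measurable p₂)
    (hne : ∀ᵐ x ∂μ, (p₁ x, p₂ x) ≠ (0, 0)) :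
    ∀ᵐ (t : ℝ) ∂(MeasureTheory.volume : MeasureTheory.Measure ℝ),
      μ {x : X |
        Complex.exp (Complex.I * (θ₁ : ℂ) * (t : ℂ)) * p₁ x
          + Complex.exp (Complex.I * (θ₂ : ℂ) * (t : ℂ)) * p₂ x = 0} = 0 := by
  have hI : Complex.I * (θ₁ : ℂ) ≠ Complex.I * (θ₂ : ℂ) := by simpa using hθ
  exact ae_iff.2 <| ((stmt_14_general hI hm₁.aemeasurable hm₂.aemeasurable hne).preimage
    Complex.ofReal_injective).measure_zero volume
end

section
/- Let s, c2, δ ∈ ℝ with s² + 4(c2 - sδ) > 0, set κ := √(s² + 4(c2 - sδ)), and let a, b ∈ ℝ with b ≠ s. Then there exists a globally defined pair of differentiable functions U, P : ℝ → ℝ with U(0) = a, P(0) = b satisfying the Lagrangian ODE system U' = -(1/2)U² + (1/2)P² - (sP + 2(c2 - sδ)) and P' = -PU + sU on all of ℝ; explicitly, U + iP = is + κ·(W₀·cos(κt/2) - κ·sin(κt/2))/(κ·cos(κt/2) + W₀·sin(κt/2)) with W₀ := a + i(b - s). -/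
/-!
The substitution `W = U + i (P - s)` turns the Lagrangian system into the single complex Riccati
equation `W' = -(W² + κ²) / 2`, and `W = 2 D' / D` linearizes it to `D'' = -(κ / 2)² D`. The
solution `D t = κ cos (κ t / 2) + W₀ sin (κ t / 2)` could vanish only if `κ` and `W₀` were linearly
dependent over `ℝ`, which `Im W₀ = b - s ≠ 0` rules out; hence `W` exists for all time.
-/

section HarmonicOscillation

variable {E : Type*} [AddCommGroup E] [Module ℝ E]

/-- The harmonic oscillation with angular frequency `ω`, initial position `u` and initial velocity
`ω • v`; it is the general solution of `D'' = -ω² D` when `ω ≠ 0`. -/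
noncomputable def harmonicOscillation (ω : ℝ) (u v : E) (t : ℝ) : E :=
  Real.cos (ω * t) • u + Real.sin (ω * t) • v

theorem harmonicOscillation_zero (ω : ℝ) (u v : E) : harmonicOscillation ω u v 0 = u := by
  simp [harmonicOscillation]

theorem harmonicOscillation_neg_neg (ω : ℝ) (u v : E) (t : ℝ) :
    harmonicOscillation ω (-u) (-v) t = -harmonicOscillation ω u v t := by
  simp only [harmonicOscillation]
  module

theorem harmonicOscillation_ne_zero {u v : E} (huv : LinearIndependent ℝ ![u, v]) (ω t : ℝ) :
    harmonicOscillation ω u v t ≠ 0 := by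
  intro hzero
  obtain ⟨hcos, hsin⟩ := LinearIndependent.pair_iff.mp huv _ _ hzero
  simpa [hcos, hsin] using Real.cos_sq_add_sin_sq (ω * t)

end HarmonicOscillation

theorem hasDerivAt_harmonicOscillation {E : Type*} [NormedAddCommGroup E] [NormedSpace ℝ E]
    (ω : ℝ) (u v : E) (t : ℝ) :
    HasDerivAt (harmonicOscillation ω u v) (ω • harmonicOscillation ω v (-u) t) t := by
  have hphase : HasDerivAt (fun τ ↦ ω * τ) ω t := hasDerivAt_const_mul ω
  refine ((hphase.cos.smul_const u).add (hphase.sin.smul_const v)).congr_deriv ?_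
  simp only [harmonicOscillation]
  module

theorem linearIndependent_ofReal_pair {x : ℝ} {w : ℂ} (hx : x ≠ 0) (hw : w.im ≠ 0) :
    LinearIndependent ℝ ![(x : ℂ), w] := by
  refine LinearIndependent.pair_iff.mpr fun c d h ↦ ?_
  have hd : d = 0 := by simpa [hw] using congrArg Complex.im h
  have hc : c = 0 := by simpa [hd, hx] using congrArg Complex.re h
  exact ⟨hc, hd⟩

/-- The solution `W = 2 D' / D` of the Riccati equation `W' = -(W² + κ²) / 2` with `W 0 = w`, where
`D = harmonicOscillation (κ / 2) κ w`. Its values are meaningful where `D` does not vanish. -/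
noncomputable def riccatiSolution (κ : ℝ) (w : ℂ) (t : ℝ) : ℂ :=
  κ * harmonicOscillation (κ / 2) w (-κ : ℂ) t / harmonicOscillation (κ / 2) (κ : ℂ) w t

theorem riccatiSolution_zero {κ : ℝ} (hκ : κ ≠ 0) (w : ℂ) : riccatiSolution κ w 0 = w := by
  have hκ' : (κ : ℂ) ≠ 0 := mod_cast hκ
  rw [riccatiSolution, harmonicOscillation_zero, harmonicOscillation_zero,
    mul_div_cancel_left₀ w hκ']

theorem riccatiSolution_eq (κ : ℝ) (w : ℂ) (t : ℝ) :
    riccatiSolution κ w t =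
      κ * (w * Real.cos (κ * t / 2) - κ * Real.sin (κ * t / 2)) /
        (κ * Real.cos (κ * t / 2) + w * Real.sin (κ * t / 2)) := by
  simp only [riccatiSolution, harmonicOscillation, Complex.real_smul, div_mul_eq_mul_div]
  ring

theorem hasDerivAt_riccatiSolution {κ t : ℝ} {w : ℂ}
    (hD : harmonicOscillation (κ / 2) (κ : ℂ) w t ≠ 0) :
    HasDerivAt (riccatiSolution κ w) (-(riccatiSolution κ w t ^ 2 + κ ^ 2) / 2) t := by
  have hnum := (hasDerivAt_harmonicOscillation (κ / 2) w (-κ : ℂ) t).const_mul (κ : ℂ)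
  have hden := hasDerivAt_harmonicOscillation (κ / 2) (κ : ℂ) w t
  refine (hnum.div hden hD).congr_deriv ?_
  simp only [riccatiSolution, harmonicOscillation_neg_neg, Complex.real_smul, Complex.ofReal_div,
    Complex.ofReal_ofNat]
  field_simp
  ring

section Lagrangian

variable {κ t : ℝ} {W : ℝ → ℂ}

theorem hasDerivAt_re_of_riccati {s c : ℝ} (hκ : κ ^ 2 = s ^ 2 + 4 * c)
    (hW : HasDerivAt W (-(W t ^ 2 + κ ^ 2) / 2) t) :
    HasDerivAt (fun τ ↦ (W τ).re)
      (-(1 / 2) * (W t).re ^ 2 + (1 / 2) * (s + (W t).im) ^ 2 -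
        (s * (s + (W t).im) + 2 * c)) t := by
  have hre : (-(W t ^ 2 + κ ^ 2) / 2 : ℂ).re = ((W t).im ^ 2 - (W t).re ^ 2 - κ ^ 2) / 2 := by
    simp only [pow_two, Complex.div_ofNat_re, Complex.neg_re, Complex.add_re, Complex.mul_re,
      Complex.ofReal_re, Complex.ofReal_im]
    ring
  refine (Complex.reCLM.hasFDerivAt.comp_hasDerivAt t hW).congr_deriv ?_
  rw [Complex.reCLM_apply, hre, hκ]
  ring

theorem hasDerivAt_const_add_im_of_riccati (s : ℝ) (hW : HasDerivAt W (-(W t ^ 2 + κ ^ 2) / 2) t) :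
    HasDerivAt (fun τ ↦ s + (W τ).im) (-(s + (W t).im) * (W t).re + s * (W t).re) t := by
  have him : (-(W t ^ 2 + κ ^ 2) / 2 : ℂ).im = -(W t).re * (W t).im := by
    simp only [pow_two, Complex.div_ofNat_im, Complex.neg_im, Complex.add_im, Complex.mul_im,
      Complex.ofReal_re, Complex.ofReal_im]
    ring
  refine ((Complex.imCLM.hasFDerivAt.comp_hasDerivAt t hW).const_add s).congr_deriv ?_
  rw [Complex.imCLM_apply, him]
  ring

end Lagrangian

theorem stmt_16 (s c2 δ a b κ : ℝ) (hpos : 0 < s^2 + 4 * (c2 - s * δ))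
    (hκ : κ = Real.sqrt (s^2 + 4 * (c2 - s * δ))) (hb : b ≠ s) :
    ∃ U P : ℝ → ℝ, U 0 = a ∧ P 0 = b ∧
      (∀ t : ℝ,
        HasDerivAt U
          (-(1/2) * (U t)^2 + (1/2) * (P t)^2 - (s * P t + 2 * (c2 - s * δ))) t ∧
        HasDerivAt P (-(P t) * U t + s * U t) t) ∧
      (∀ t : ℝ, (U t : ℂ) + Complex.I * (P t : ℝ) =
        Complex.I * (s : ℂ)
          + (κ : ℂ) * (((a : ℂ) + Complex.I * ((b : ℂ) - (s : ℂ))) * (Real.cos (κ * t / 2) : ℝ)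
              - (κ : ℂ) * (Real.sin (κ * t / 2) : ℝ)) /
            ((κ : ℂ) * (Real.cos (κ * t / 2) : ℝ)
              + ((a : ℂ) + Complex.I * ((b : ℂ) - (s : ℂ))) * (Real.sin (κ * t / 2) : ℝ))) := by
  have hκ_ne : κ ≠ 0 := hκ ▸ (Real.sqrt_pos.mpr hpos).ne'
  have hκ_sq : κ ^ 2 = s ^ 2 + 4 * (c2 - s * δ) := hκ ▸ Real.sq_sqrt hpos.le
  set w : ℂ := a + Complex.I * (b - s) with hw
  have hw_re : w.re = a := by simp [hw]
  have hw_im : w.im = b - s := by simp [hw]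
  have hindep : LinearIndependent ℝ ![(κ : ℂ), w] :=
    linearIndependent_ofReal_pair hκ_ne (hw_im ▸ sub_ne_zero.mpr hb)
  have hW (t : ℝ) : HasDerivAt (riccatiSolution κ w)
      (-(riccatiSolution κ w t ^ 2 + κ ^ 2) / 2) t :=
    hasDerivAt_riccatiSolution (harmonicOscillation_ne_zero hindep (κ / 2) t)
  refine ⟨fun t ↦ (riccatiSolution κ w t).re, fun t ↦ s + (riccatiSolution κ w t).im, ?_, ?_,
    fun t ↦ ⟨hasDerivAt_re_of_riccati hκ_sq (hW t), hasDerivAt_const_add_im_of_riccati s (hW t)⟩,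
    fun t ↦ ?_⟩
  · simp only [riccatiSolution_zero hκ_ne, hw_re]
  · simp only [riccatiSolution_zero hκ_ne, hw_im, add_sub_cancel]
  · rw [← riccatiSolution_eq]
    apply Complex.ext <;> simp
end
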